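/- Let A = ℚ[t₁, t₂] ⊗ Λ(v₁,…,v₆) with deg v₁ = deg v₂ = deg v₃ = deg v₄ = 3 and deg v₅ = deg v₆ = 7, and let D be the unique derivation of degree +1 on A with D t₁ = D t₂ = 0, D v₁ = D v₂ = D v₃ = D v₄ = 0, D v₅ = v₁v₂t₁ + t₁⁴ and D v₆ = v₁v₃(t₁ + t₂) + v₂v₄t₂ + t₂⁴. Then D ∘ D = 0 and dim_ℚ H(A, D) < ∞. -/

import Mathlib

/-!
The map `D` is linear over the polynomial ring `R = ℚ[t₁, t₂]`, over which the whole algebra `A` is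
a finite free module, since the exterior factor is finite dimensional over `ℚ`. Hence `ker D` is a
finitely generated `R`-module by Noetherianity, and `H(A, D)` is finite dimensional as soon as a
power of each `tᵢ` sends cocycles to coboundaries (`finiteDimensional_of_pow_smul`).

This is so because `D v₅` and `D v₆` have the form `u + T` with `T = tᵢ⁴` and `u` a nilpotent
element of the ideal `(v₁, …, v₄)` commuting with `T` and with `D`. For `v₅` one has `u² = 0`, so
`(u + T)(T - u) = T²`; for `v₆` one has `u³ = 0`, so `(u + T)(T² - T u + u²) = T³`. If `z` is a
cocycle, so is `c z` for `c = T - u` or `c = T² - T u + u²`, and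
`D (v₅ c z) = (D v₅) c z = t₁⁸ z`, respectively `D (v₆ c z) = t₂¹² z`.

For `D ∘ D = 0`: the elements killed by `D ∘ D` contain `1` and are stable under left
multiplication by every generator, because left multiplication by `D vⱼ` commutes with `D`.
-/

/- D v₅ = v₁v₂t₁ + t₁⁴, D v₆ = v₁v₃(t₁+t₂) + v₂v₄t₂ + t₂⁴ on ℚ[t₁,t₂] ⊗ Λ(v₁,…,v₆), deg v = (3,3,3,3,7,7). -/

open scoped TensorProduct

set_option synthInstance.maxHeartbeats 1000000
set_option maxHeartbeats 1000000

noncomputable section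

/-- The free graded-commutative ℚ-algebra `ℚ[t₁,…,t_r] ⊗ Λ(v₁,…,v_n)`:
the tensor product of a polynomial algebra on `r` generators of degree 2 with
an exterior algebra on `n` generators of odd degrees. -/
abbrev FGCA (r n : ℕ) : Type :=
  MvPolynomial (Fin r) ℚ ⊗[ℚ] ExteriorAlgebra ℚ (Fin n → ℚ)

/-- The degree-2 polynomial generators `tᵢ`. -/
def tg (r n : ℕ) (i : Fin r) : FGCA r n := (MvPolynomial.X i) ⊗ₜ 1

/-- The odd-degree exterior generators `vⱼ`. -/
def vg (r n : ℕ) (j : Fin n) : FGCA r n :=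
  1 ⊗ₜ (ExteriorAlgebra.ι ℚ (Pi.single j (1 : ℚ)))

/-- The monomial `t^α · v_S` (with the exterior factors multiplied in increasing
order of index).  These monomials form a ℚ-basis of `FGCA r n`. -/
def gmon (r n : ℕ) (α : Fin r →₀ ℕ) (S : Finset (Fin n)) : FGCA r n :=
  (MvPolynomial.monomial α (1 : ℚ)) ⊗ₜ
    ((S.sort (· ≤ ·)).map fun j => ExteriorAlgebra.ι ℚ (Pi.single j (1 : ℚ))).prod

/-- The (cohomological) degree of the monomial `t^α · v_S`, where each `tᵢ` has
degree `2` and each `vⱼ` has degree `dv j`. -/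
def gdeg (r n : ℕ) (dv : Fin n → ℕ) (α : Fin r →₀ ℕ) (S : Finset (Fin n)) : ℕ :=
  (α.sum fun _ k => 2 * k) + S.sum dv

/-- The homogeneous part of degree `k` of `FGCA r n`: the span of the monomials
of degree `k`. -/
def homog (r n : ℕ) (dv : Fin n → ℕ) (k : ℕ) : Submodule ℚ (FGCA r n) :=
  Submodule.span ℚ { a | ∃ α S, gdeg r n dv α S = k ∧ a = gmon r n α S }

/-- The graded Leibniz rule for a degree `+1` derivation `D`:
`D(ab) = D(a)·b + (−1)^(deg a) a·D(b)` for homogeneous `a`. -/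
def IsLeibniz (r n : ℕ) (dv : Fin n → ℕ) (D : FGCA r n →ₗ[ℚ] FGCA r n) : Prop :=
  ∀ (p : ℕ) (a b : FGCA r n), a ∈ homog r n dv p →
    D (a * b) = D a * b + ((-1 : ℚ) ^ p) • (a * D b)

/-- `D` raises (cohomological) degree by `1`. -/
def RaisesDegByOne (r n : ℕ) (dv : Fin n → ℕ) (D : FGCA r n →ₗ[ℚ] FGCA r n) : Prop :=
  ∀ (k : ℕ), ∀ a ∈ homog r n dv k, D a ∈ homog r n dv (k + 1)

/-- The cohomology `H(A, D) = ker D / im D` as a ℚ-vector space, realized as the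
image of `ker D` in `A ⧸ im D`. -/
abbrev Cohomology (r n : ℕ) (D : FGCA r n →ₗ[ℚ] FGCA r n) : Type :=
  (LinearMap.ker D).map (LinearMap.range D).mkQ

end

noncomputable section

open MvPolynomial in
/-- If `D` is linear over `R = ℚ[t₁, …, t_r]` on a finite `R`-module and some power of every `tᵢ`
sends cocycles to coboundaries, then the cohomology is spanned over `ℚ` by the finitely many
classes `t^α g` with `α` bounded and `g` in a finite generating set of the `R`-module `ker D`. -/
theorem finiteDimensional_of_pow_smul {r : ℕ} {A : Type*} [AddCommGroup A] [Module ℚ A]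
    [Module (MvPolynomial (Fin r) ℚ) A] [IsScalarTower ℚ (MvPolynomial (Fin r) ℚ) A]
    [Module.Finite (MvPolynomial (Fin r) ℚ) A] (D : A →ₗ[ℚ] A)
    (hX : ∀ i a, D ((X i : MvPolynomial (Fin r) ℚ) • a) = (X i : MvPolynomial (Fin r) ℚ) • D a)
    (n : ℕ)
    (hk : ∀ i z, D z = 0 → ((X i : MvPolynomial (Fin r) ℚ) ^ n) • z ∈ LinearMap.range D) :
    FiniteDimensional ℚ ((LinearMap.ker D).map (LinearMap.range D).mkQ) := by
  classical
  have hR : ∀ (p : MvPolynomial (Fin r) ℚ) (a : A), D (p • a) = p • D a := by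
    intro p
    induction p using MvPolynomial.induction_on with
    | C c =>
      intro a
      have h : ∀ b : A, (C c : MvPolynomial (Fin r) ℚ) • b = c • b := fun b => by
        rw [← algebraMap_eq, algebraMap_smul]
      rw [h, h, map_smul]
    | add p q hp hq => intro a; rw [add_smul, add_smul, map_add, hp, hq]
    | mul_X p i hp => intro a; rw [mul_smul, mul_smul, hp, hX]
  let V : Submodule (MvPolynomial (Fin r) ℚ) A :=
    LinearMap.ker ({ toFun := D, map_add' := D.map_add, map_smul' := hR } :
      A →ₗ[MvPolynomial (Fin r) ℚ] A)
  have hV : ∀ z, z ∈ V ↔ D z = 0 := fun z => Iff.rfl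
  have : IsNoetherian (MvPolynomial (Fin r) ℚ) A := isNoetherian_of_isNoetherianRing_of_finite _ _
  obtain ⟨s, hs⟩ : V.FG := IsNoetherian.noetherian V
  let B : Finset (Fin r →₀ ℕ) := Finset.Iic (Finsupp.equivFunOnFinite.symm fun _ => n)
  let T : Finset A :=
    (B ×ˢ s).image fun q => (monomial q.1 (1 : ℚ) : MvPolynomial (Fin r) ℚ) • q.2
  have key : LinearMap.ker D ≤ Submodule.span ℚ (T : Set A) ⊔ LinearMap.range D := by
    intro z hz
    have hz' : z ∈ Submodule.span (MvPolynomial (Fin r) ℚ) (s : Set A) := by rw [hs]; exact hz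
    induction hz' using Submodule.closure_induction with
    | zero => exact zero_mem _
    | add x y hx hy h1 h2 =>
      rw [hs] at hx hy
      exact add_mem (h1 hx) (h2 hy)
    | smul_mem p g hg =>
      have hgV : D g = 0 := by
        rw [← hV, ← hs]; exact Submodule.subset_span hg
      clear hz
      induction p using MvPolynomial.induction_on' with
      | add p q hp hq => rw [add_smul]; exact add_mem hp hq
      | monomial α c =>
        have h1 : (monomial α c : MvPolynomial (Fin r) ℚ) • g
            = c • ((monomial α (1 : ℚ) : MvPolynomial (Fin r) ℚ) • g) := by
          rw [← smul_assoc, smul_monomial, smul_eq_mul, mul_one]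
        rw [h1]
        refine Submodule.smul_mem _ _ ?_
        by_cases hα : ∀ i, α i ≤ n
        · refine Submodule.mem_sup_left (Submodule.subset_span ?_)
          refine Finset.mem_coe.2 (Finset.mem_image.2 ⟨(α, g), Finset.mem_product.2 ⟨?_, hg⟩, rfl⟩)
          exact Finset.mem_Iic.2 hα
        · push Not at hα
          obtain ⟨i, hi⟩ := hα
          refine Submodule.mem_sup_right ?_
          have h2 : (monomial α (1 : ℚ) : MvPolynomial (Fin r) ℚ)
              = X i ^ n * monomial (α - Finsupp.single i n) 1 := by
            rw [X_pow_eq_monomial, monomial_mul, one_mul, add_tsub_cancel_of_le]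
            rw [Finsupp.single_le_iff]
            exact hi.le
          rw [h2, mul_smul]
          apply hk
          rw [hR, hgV, smul_zero]
  have hle : (LinearMap.ker D).map (LinearMap.range D).mkQ
      ≤ (Submodule.span ℚ (T : Set A)).map (LinearMap.range D).mkQ := by
    refine (Submodule.map_mono key).trans ?_
    rw [Submodule.map_sup]
    refine sup_le le_rfl ?_
    rintro _ ⟨y, hy, rfl⟩
    rw [Submodule.mkQ_apply, (Submodule.Quotient.mk_eq_zero _).2 hy]
    exact zero_mem _
  have : FiniteDimensional ℚ (Submodule.span ℚ (T : Set A)) :=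
    FiniteDimensional.span_finset ℚ T
  exact Submodule.finiteDimensional_of_le hle

/-! ### Generators of `ℚ[t₁,…,t_r] ⊗ Λ(v₁,…,v_n)` -/

theorem tg_mem_homog (r n : ℕ) (dv : Fin n → ℕ) (i : Fin r) : tg r n i ∈ homog r n dv 2 := by
  refine Submodule.subset_span ⟨Finsupp.single i 1, ∅, ?_, ?_⟩
  · simp [gdeg]
  · simp [gmon, tg, MvPolynomial.X]

theorem vg_mem_homog (r n : ℕ) (dv : Fin n → ℕ) (j : Fin n) :
    vg r n j ∈ homog r n dv (dv j) := by
  refine Submodule.subset_span ⟨0, {j}, ?_, ?_⟩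
  · simp [gdeg]
  · simp [gmon, vg]

theorem one_mem_homog (r n : ℕ) (dv : Fin n → ℕ) : (1 : FGCA r n) ∈ homog r n dv 0 := by
  refine Submodule.subset_span ⟨0, ∅, ?_, ?_⟩
  · simp [gdeg]
  · simp [gmon, Algebra.TensorProduct.one_def]

theorem vg_mul_self (r n : ℕ) (j : Fin n) : vg r n j * vg r n j = 0 := by
  simp [vg, Algebra.TensorProduct.tmul_mul_tmul]

theorem vg_mul_vg (r n : ℕ) (i j : Fin n) : vg r n i * vg r n j + vg r n j * vg r n i = 0 := by
  simp only [vg, Algebra.TensorProduct.tmul_mul_tmul, ← TensorProduct.tmul_add,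
    ExteriorAlgebra.ι_add_mul_swap, TensorProduct.tmul_zero]

theorem X_smul_eq_tg_mul (r n : ℕ) (i : Fin r) (a : FGCA r n) :
    (MvPolynomial.X i : MvPolynomial (Fin r) ℚ) • a = tg r n i * a := by
  exact Algebra.smul_def (MvPolynomial.X i : MvPolynomial (Fin r) ℚ) a

theorem tg_commute (r n : ℕ) (i : Fin r) (a : FGCA r n) : Commute (tg r n i) a :=
  Algebra.commutes (MvPolynomial.X i : MvPolynomial (Fin r) ℚ) a

/-- Left multiplications by the generators, applied to `1`, span the algebra. -/
theorem fgca_induction {r n : ℕ} (P : Submodule ℚ (FGCA r n)) (one : 1 ∈ P)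
    (tmul : ∀ i a, a ∈ P → tg r n i * a ∈ P) (vmul : ∀ j a, a ∈ P → vg r n j * a ∈ P)
    (x : FGCA r n) : x ∈ P := by
  induction x using TensorProduct.induction_on with
  | zero => exact zero_mem _
  | add x y hx hy => exact add_mem hx hy
  | tmul p y =>
    induction p using MvPolynomial.induction_on with
    | add p q hp hq => rw [TensorProduct.add_tmul]; exact add_mem hp hq
    | mul_X p i hp =>
      have : (p * MvPolynomial.X i) ⊗ₜ[ℚ] y = tg r n i * (p ⊗ₜ[ℚ] y) := by
        rw [tg, Algebra.TensorProduct.tmul_mul_tmul, one_mul, mul_comm]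
      rw [this]
      exact tmul i _ hp
    | C c =>
      have : (MvPolynomial.C c : MvPolynomial (Fin r) ℚ) ⊗ₜ[ℚ] y = c • (1 ⊗ₜ[ℚ] y) := by
        rw [TensorProduct.smul_tmul', MvPolynomial.smul_eq_C_mul, mul_one]
      rw [this]
      refine P.smul_mem _ ?_
      induction y using CliffordAlgebra.left_induction with
      | algebraMap q =>
        rw [Algebra.algebraMap_eq_smul_one, TensorProduct.tmul_smul]
        exact P.smul_mem _ one
      | add x y hx hy =>
        rw [TensorProduct.tmul_add]
        exact add_mem (hx (by rw [TensorProduct.smul_tmul', MvPolynomial.smul_eq_C_mul, mul_one]))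
          (hy (by rw [TensorProduct.smul_tmul', MvPolynomial.smul_eq_C_mul, mul_one]))
      | ι_mul x m hx =>
        have hx := hx (by rw [TensorProduct.smul_tmul', MvPolynomial.smul_eq_C_mul, mul_one])
        have h : ((1 : MvPolynomial (Fin r) ℚ) ⊗ₜ[ℚ] (ExteriorAlgebra.ι ℚ m * x) : FGCA r n)
            = ∑ j, m j • (vg r n j * ((1 : MvPolynomial (Fin r) ℚ) ⊗ₜ[ℚ] x)) := by
          conv_lhs => rw [pi_eq_sum_univ' m]
          simp only [vg, Algebra.TensorProduct.tmul_mul_tmul, map_sum, map_smul, Finset.sum_mul,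
            TensorProduct.tmul_sum, smul_mul_assoc, TensorProduct.tmul_smul, one_mul]
        refine (congrArg (· ∈ P) h).mpr ?_
        exact sum_mem fun j _ => P.smul_mem _ (vmul j _ hx)

theorem finite_fgca (r n : ℕ) : Module.Finite (MvPolynomial (Fin r) ℚ) (FGCA r n) := by
  have : Module.Finite ℚ (ExteriorAlgebra ℚ (Fin n → ℚ)) :=
    Module.Finite.of_basis (Pi.basisFun ℚ (Fin n)).ExteriorAlgebra
  infer_instance

/-! ### Coboundaries and multiplication by powers of `tᵢ` -/

theorem commute_mul_of_anticomm {A : Type*} [Ring A] {x y z : A} (hx : x * z = -(z * x))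
    (hy : y * z = -(z * y)) : Commute (x * y) z := by
  rw [Commute, SemiconjBy, mul_assoc, hy, mul_neg, ← mul_assoc, hx, neg_mul, neg_neg, mul_assoc]

theorem mul_mul_self_eq_zero {A : Type*} [Ring A] {x y s : A} (hx : x * x = 0)
    (hxy : y * x = -(x * y)) (hs : ∀ a, Commute s a) : x * y * s * (x * y * s) = 0 := by
  have h : x * y * s * (x * y * s) = x * (y * x) * y * (s * s) := by
    rw [mul_assoc (x * y) s, (hs (x * y * s)).eq]
    noncomm_ring
  rw [h, hxy, mul_neg, ← mul_assoc x x y, hx]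
  simp

theorem add_cube_eq_zero {A : Type*} [Ring A] {a b : A} (ha : a * a = 0) (hb : b * b = 0)
    (hab : Commute a b) : (a + b) * ((a + b) * (a + b)) = 0 := by
  have h1 : (a + b) * (a + b) = 2 • (a * b) := by
    rw [add_mul, mul_add, mul_add, ha, hb, ← hab.eq]
    abel
  rw [h1, mul_smul_comm, add_mul, ← mul_assoc a a b, ha, hab.eq, ← mul_assoc b b a, hb]
  simp

/-- The computations with the cocycles `tᵢ, v₁, …, v₄` and the elements `v₅, v₆` (here
`t 0, t 1` and `v 0, …, v 5`), in an arbitrary `ℚ`-algebra: `D ∘ D = 0` propagates along left multiplication by the `vⱼ`, and `t₁¹²`, `t₂¹²` send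
cocycles to coboundaries. -/
theorem core_computation {A : Type*} [Ring A] [Algebra ℚ A] (D : A →ₗ[ℚ] A)
    (t : Fin 2 → A) (v : Fin 6 → A)
    (hcomm : ∀ i a, Commute (t i) a) (hsq : ∀ j, v j * v j = 0)
    (hanti : ∀ i j, v i * v j + v j * v i = 0)
    (dt : ∀ i b, D (t i * b) = t i * D b)
    (dv : ∀ j b, D (v j * b) + v j * D b = D (v j) * b)
    (h1 : D (v 0) = 0) (h2 : D (v 1) = 0) (h3 : D (v 2) = 0) (h4 : D (v 3) = 0)
    (h5 : D (v 4) = v 0 * v 1 * t 0 + t 0 ^ 4)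
    (h6 : D (v 5) = v 0 * v 2 * (t 0 + t 1) + v 1 * v 3 * t 1 + t 1 ^ 4) :
    (∀ j a, D (D a) = 0 → D (D (v j * a)) = 0) ∧
      ∀ i z, D z = 0 → t i ^ 12 * z ∈ LinearMap.range D := by
  have hanti : ∀ i j, v i * v j = -(v j * v i) := fun i j => eq_neg_of_add_eq_zero_left (hanti i j)
  have dv : ∀ j b, D (v j * b) = D (v j) * b - v j * D b := fun j b =>
    eq_sub_of_add_eq (dv j b)
  have dv1 : ∀ b, D (v 0 * b) = -(v 0 * D b) := fun b => by rw [dv, h1, zero_mul, zero_sub]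
  have dv2 : ∀ b, D (v 1 * b) = -(v 1 * D b) := fun b => by rw [dv, h2, zero_mul, zero_sub]
  have dv3 : ∀ b, D (v 2 * b) = -(v 2 * D b) := fun b => by rw [dv, h3, zero_mul, zero_sub]
  have dv4 : ∀ b, D (v 3 * b) = -(v 3 * D b) := fun b => by rw [dv, h4, zero_mul, zero_sub]
  have dT : ∀ i b, D (t i ^ 4 * b) = t i ^ 4 * D b := by
    intro i b
    simp only [pow_succ, pow_zero, one_mul, mul_assoc, dt]
  have du : ∀ b, D (v 0 * v 1 * t 0 * b) = v 0 * v 1 * t 0 * D b := by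
    intro b
    simp only [mul_assoc, dv1, dv2, dt, mul_neg, neg_neg]
  have dw : ∀ b, D ((v 0 * v 2 * (t 0 + t 1) + v 1 * v 3 * t 1) * b)
      = (v 0 * v 2 * (t 0 + t 1) + v 1 * v 3 * t 1) * D b := by
    intro b
    simp only [mul_assoc, add_mul, mul_add, map_add, dv1, dv2, dv3, dv4, dt, mul_neg, neg_neg]
  -- Left multiplication by the coboundary of a generator commutes with `D`.
  have dD : ∀ j b, D (D (v j) * b) = D (v j) * D b := by
    intro j b
    fin_cases j
    · change D (D (v 0) * b) = D (v 0) * D b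
      rw [h1]; simp
    · change D (D (v 1) * b) = D (v 1) * D b
      rw [h2]; simp
    · change D (D (v 2) * b) = D (v 2) * D b
      rw [h3]; simp
    · change D (D (v 3) * b) = D (v 3) * D b
      rw [h4]; simp
    · change D (D (v 4) * b) = D (v 4) * D b
      rw [h5, add_mul, map_add, du, dT, add_mul]
    · change D (D (v 5) * b) = D (v 5) * D b
      rw [h6, add_mul, map_add, dw, dT, ← add_mul]
  refine ⟨?_, ?_⟩
  · intro j a ha
    rw [dv, map_sub, dD, dv, ha, mul_zero, sub_zero, sub_self]
  intro i z hz
  fin_cases i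
  · change t 0 ^ 12 * z ∈ _
    have hu : (v 0 * v 1 * t 0) * (v 0 * v 1 * t 0) = 0 :=
      mul_mul_self_eq_zero (hsq _) (hanti _ _) (hcomm _)
    have hc : Commute (t 0 ^ 4) (v 0 * v 1 * t 0) := (hcomm _ _).pow_left 4
    have hT : t 0 ^ 12 = t 0 ^ 4 * t 0 ^ 4 * t 0 ^ 4 := by rw [← pow_add, ← pow_add]
    rw [hT]
    have dT := dT 0
    generalize v 0 * v 1 * t 0 = u at *
    generalize t 0 ^ 4 = T at *
    refine ⟨v 4 * ((T - u) * (T * z)), ?_⟩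
    have h0 : D ((T - u) * (T * z)) = 0 := by
      rw [sub_mul, map_sub, dT, du, dT, hz]
      simp
    rw [dv, h0, h5, mul_zero, sub_zero, ← mul_assoc, ← mul_assoc]
    congr 2
    rw [add_mul, mul_sub, mul_sub, hu, hc.eq]
    abel
  · change t 1 ^ 12 * z ∈ _
    have hs : ∀ a, Commute (t 0 + t 1) a := fun a => (hcomm _ _).add_left (hcomm _ _)
    have hab : Commute (v 0 * v 2 * (t 0 + t 1)) (v 1 * v 3 * t 1) := by
      refine Commute.mul_left ?_ (hs _)
      refine Commute.mul_right ?_ (hcomm _ _).symm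
      exact Commute.mul_right
        (commute_mul_of_anticomm (hanti _ _) (hanti _ _))
        (commute_mul_of_anticomm (hanti _ _) (hanti _ _))
    have hu := add_cube_eq_zero
      (mul_mul_self_eq_zero (hsq _) (hanti _ _) hs)
      (mul_mul_self_eq_zero (hsq _) (hanti _ _) (hcomm _)) hab
    have hc : Commute (t 1 ^ 4) (v 0 * v 2 * (t 0 + t 1) + v 1 * v 3 * t 1) :=
      (hcomm _ _).pow_left 4
    have hT : t 1 ^ 12 = t 1 ^ 4 * (t 1 ^ 4 * t 1 ^ 4) := by rw [← pow_add, ← pow_add]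
    rw [hT]
    have dT := dT 1
    generalize v 0 * v 2 * (t 0 + t 1) + v 1 * v 3 * t 1 = u at *
    generalize t 1 ^ 4 = T at *
    refine ⟨v 5 * ((T * T - T * u + u * u) * z), ?_⟩
    have h0 : D ((T * T - T * u + u * u) * z) = 0 := by
      simp only [sub_mul, add_mul, mul_assoc, map_sub, map_add, dT, dw, hz]
      simp
    rw [dv, h0, h6, mul_zero, sub_zero, ← mul_assoc]
    congr 1
    have h : (u + T) * (T * T - T * u + u * u)
        = T * (T * T) + u * (u * u) + (u * T - T * u) * T + T * (u * T - T * u)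
          - (u * T - T * u) * u := by
      noncomm_ring
    rw [h, hu, hc.eq]
    simp

local notation "dv" => (![3, 3, 3, 3, 7, 7] : Fin 6 → ℕ)
local notation "t₁" => tg 2 6 0
local notation "t₂" => tg 2 6 1
local notation "v₁" => vg 2 6 0
local notation "v₂" => vg 2 6 1
local notation "v₃" => vg 2 6 2
local notation "v₄" => vg 2 6 3
local notation "v₅" => vg 2 6 4
local notation "v₆" => vg 2 6 5

theorem stmt_13 (D : FGCA 2 6 →ₗ[ℚ] FGCA 2 6)
    (hLeib : IsLeibniz 2 6 dv D)
    (hdeg : RaisesDegByOne 2 6 dv D)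
    (hD0 : D t₁ = (0 : FGCA 2 6))
    (hD1 : D t₂ = (0 : FGCA 2 6))
    (hD2 : D v₁ = (0 : FGCA 2 6))
    (hD3 : D v₂ = (0 : FGCA 2 6))
    (hD4 : D v₃ = (0 : FGCA 2 6))
    (hD5 : D v₄ = (0 : FGCA 2 6))
    (hD6 : D v₅ = v₁ * v₂ * t₁ + t₁ ^ 4)
    (hD7 : D v₆ = v₁ * v₃ * (t₁ + t₂) + v₂ * v₄ * t₂ + t₂ ^ 4)
    : D ∘ₗ D = 0 ∧ FiniteDimensional ℚ (Cohomology 2 6 D) := by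
  have dt : ∀ (i : Fin 2) (b : FGCA 2 6), D (tg 2 6 i * b) = tg 2 6 i * D b := by
    intro i b
    have h0 : D (tg 2 6 i) = 0 := by
      fin_cases i
      · exact hD0
      · exact hD1
    rw [hLeib 2 _ b (tg_mem_homog 2 6 dv i), h0]
    simp
  have dvg : ∀ (j : Fin 6) (b : FGCA 2 6),
      D (vg 2 6 j * b) + vg 2 6 j * D b = D (vg 2 6 j) * b := by
    intro j b
    have hodd : Odd ((dv) j) := by
      revert j; decide
    have h : ∀ y : FGCA 2 6, (-1 : ℚ) • y + y = 0 := fun y => by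
      nth_rewrite 2 [← one_smul ℚ y]
      rw [← add_smul, neg_add_cancel, zero_smul]
    rw [hLeib _ _ b (vg_mem_homog 2 6 dv j), hodd.neg_one_pow, add_assoc, h, add_zero]
  have d_one : D 1 = 0 := by
    have h := hLeib 0 1 1 (one_mem_homog 2 6 dv)
    simpa using h
  obtain ⟨hsq, hpow⟩ := core_computation D (tg 2 6) (vg 2 6) (tg_commute 2 6) (vg_mul_self 2 6)
    (vg_mul_vg 2 6) dt dvg hD2 hD3 hD4 hD5 hD6 hD7
  refine ⟨?_, ?_⟩
  · refine LinearMap.ext fun x => ?_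
    refine fgca_induction (LinearMap.ker (D ∘ₗ D)) ?_ ?_ (fun j a ha => hsq j a ha) x
    · simp [d_one]
    · intro i a ha
      have ha : D (D a) = 0 := ha
      change D (D _) = 0
      rw [dt, dt, ha, mul_zero]
  · have := finite_fgca 2 6
    refine finiteDimensional_of_pow_smul (r := 2) D ?_ 12 ?_
    · intro i a
      rw [X_smul_eq_tg_mul, X_smul_eq_tg_mul, dt]
    · have hX : ∀ (i : Fin 2) (k : ℕ) (z : FGCA 2 6),
          ((MvPolynomial.X i : MvPolynomial (Fin 2) ℚ) ^ k) • z = tg 2 6 i ^ k * z := by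
        intro i k z
        induction k with
        | zero => simp
        | succ k ih =>
          rw [pow_succ', mul_smul, ih, X_smul_eq_tg_mul, pow_succ', mul_assoc]
      intro i z hz
      rw [hX]
      exact hpow i z hz

end
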